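/- Let (U,ρ) be a complete metric space and let p ≥ 1. Then W(ℝ,U) ∩ M*_p(ℝ,U) ⊆ W̃(ℝ,U) ∩ M*_p(ℝ,U) ⊆ W̃_p(ℝ,U); in particular, W_p(ℝ,U) ⊆ W̃_p(ℝ,U). -/

import Mathlib

open MeasureTheory Filter Topology TopologicalSpace
open scoped ENNReal Pointwise

noncomputable section

/-- The truncated ("bounded") distance `ρ'(x,y) = min {1, ρ(x,y)}` on a metric space. -/
def bdist {α : Type*} [PseudoMetricSpace α] : α → α → ℝ := fun x y => min 1 (dist x y)

/-- The Hausdorff distance `dist_{ρ'}` (corresponding to the truncated metric `ρ'`)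
between non-empty closed subsets of a metric space. -/
def clDist {α : Type*} [MetricSpace α] : Closeds α → Closeds α → ℝ :=
  fun A B => (min 1 (EMetric.hausdorffEdist (A : Set α) (B : Set α))).toReal

/-- The Hausdorff distance `dist_ρ` between (non-empty closed bounded) subsets. -/
def clbDist {α : Type*} [MetricSpace α] : Closeds α → Closeds α → ℝ :=
  fun A B => Metric.hausdorffDist (A : Set α) (B : Set α)

/-- `D^{(d)}_{p,l}(f,g) = ( sup_ξ (1/l) ∫_ξ^{ξ+l} d(f t, g t)^p dt )^{1/p}`,
valued in `ℝ≥0∞`. -/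
def weylD {α : Type*} (d : α → α → ℝ) (p l : ℝ) (f g : ℝ → α) : ℝ≥0∞ :=
  (⨆ ξ : ℝ, ENNReal.ofReal (1 / l) *
      ∫⁻ t in Set.Icc ξ (ξ + l), ENNReal.ofReal (d (f t) (g t) ^ p)) ^ (1 / p)

/-- The Weyl semimetric `D^{(d)}_p(f,g) = lim_{l → +∞} D^{(d)}_{p,l}(f,g)`
(the limit exists; it is formalized here as a `limsup`). -/
def weylDinf {α : Type*} (d : α → α → ℝ) (p : ℝ) (f g : ℝ → α) : ℝ≥0∞ :=
  Filter.limsup (fun l => weylD d p l f g) Filter.atTop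

/-- Membership in `M_p(ℝ, α)`: `f` is (strongly) measurable and
`sup_ξ ∫_ξ^{ξ+1} d(f t, x₀)^p dt < +∞`. -/
def MemMp {α : Type*} [TopologicalSpace α] (d : α → α → ℝ) (p : ℝ) (x₀ : α)
    (f : ℝ → α) : Prop :=
  AEStronglyMeasurable f MeasureTheory.volume ∧
  ∃ C : ℝ, ∀ ξ : ℝ,
    (∫⁻ t in Set.Icc ξ (ξ + 1), ENNReal.ofReal (d (f t) x₀ ^ p)) ≤ ENNReal.ofReal C

/-- A set `T ⊆ ℝ` is relatively dense. -/
def RelDense (T : Set ℝ) : Prop := ∃ a > 0, ∀ ξ : ℝ, (Set.Icc ξ (ξ + a) ∩ T).Nonempty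

/-- The set of `(ε, D^{(d)}_{p,l})`-almost periods of `f`. -/
def APeriodsL {α : Type*} (d : α → α → ℝ) (p l ε : ℝ) (f : ℝ → α) : Set ℝ :=
  {τ | weylD d p l f (fun t => f (t + τ)) < ENNReal.ofReal ε}

/-- The set `P^{(d)}_p(ε; f)` of `(ε, D^{(d)}_p)`-almost periods of `f`. -/
def APeriods {α : Type*} (d : α → α → ℝ) (p ε : ℝ) (f : ℝ → α) : Set ℝ :=
  {τ | weylDinf d p f (fun t => f (t + τ)) < ENNReal.ofReal ε}

/-- Membership in the space `W_p(ℝ, α)` of Weyl almost periodic functions of order `p`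
w.r.t. the distance `d` (with distinguished point `x₀`). -/
def MemWp {α : Type*} [TopologicalSpace α] (d : α → α → ℝ) (p : ℝ) (x₀ : α)
    (f : ℝ → α) : Prop :=
  MemMp d p x₀ f ∧ ∀ ε > 0, ∃ l > 0, RelDense (APeriodsL d p l ε f)

/-- The module `Mod f`: the additive group of all `λ ∈ ℝ` such that `e^{iλτ_j} → 1`
for every `f`-returning sequence `{τ_j}` (a sequence with `D^{(d)}_1(f, f(·+τ_j)) → 0`,
where `d` is the relevant bounded distance). -/
def WMod {α : Type*} (d : α → α → ℝ) (f : ℝ → α) : Set ℝ :=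
  {lam : ℝ | ∀ τ : ℕ → ℝ,
    Tendsto (fun j => weylDinf d 1 f (fun t => f (t + τ j))) atTop (nhds 0) →
    Tendsto (fun j => Complex.exp (Complex.I * ((lam * τ j : ℝ) : ℂ))) atTop (nhds 1)}

/-- `κ_W(T) = lim_{l → +∞} sup_ξ (1/l) meas([ξ, ξ+l] ∩ T)` (formalized as a `limsup`). -/
def kappaW (T : Set ℝ) : ℝ≥0∞ :=
  Filter.limsup (fun l : ℝ => ⨆ ξ : ℝ,
    ENNReal.ofReal (1 / l) * MeasureTheory.volume (Set.Icc ξ (ξ + l) ∩ T)) Filter.atTop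

/-- Membership in `M*_p(ℝ, α)`. -/
def MemMpStar {α : Type*} [TopologicalSpace α] (d : α → α → ℝ) (p : ℝ) (x₀ : α)
    (f : ℝ → α) : Prop :=
  MemMp d p x₀ f ∧
  ∀ ε > 0, ∃ δ > 0, ∀ T : Set ℝ, MeasurableSet T → kappaW T < ENNReal.ofReal δ →
    Filter.limsup (fun l : ℝ => ⨆ ξ : ℝ, ENNReal.ofReal (1 / l) *
        ∫⁻ t in Set.Icc ξ (ξ + l) ∩ T, ENNReal.ofReal (d (f t) x₀ ^ p)) Filter.atTop
      < ENNReal.ofReal ε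

/-- Distance from a point to a set w.r.t. the distance `d`, valued in `ℝ≥0∞`
(`∞` for the empty set). -/
def dInfDist {α : Type*} (d : α → α → ℝ) (x : α) (K : Set α) : ℝ≥0∞ :=
  ⨅ y ∈ K, ENNReal.ofReal (d x y)

/-- Membership in `W̃_p(ℝ, α)`: conditions 1) (relatively dense sets of
`(ε, D^{(d)}_p)`-almost periods) and 2) (approximate compactness of values). -/
def MemWpTilde {α : Type*} [TopologicalSpace α] (d : α → α → ℝ) (p : ℝ) (x₀ : α)
    (f : ℝ → α) : Prop :=
  MemMp d p x₀ f ∧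
  (∀ ε > 0, RelDense (APeriods d p ε f)) ∧
  (∀ ε > 0, ∀ δ > 0, ∃ K : Set α, IsCompact K ∧
      kappaW {t | ENNReal.ofReal ε ≤ dInfDist d (f t) K} < ENNReal.ofReal δ)

/-- The support of a Borel measure on a topological space. -/
def measSupport {α : Type*} [TopologicalSpace α] [MeasurableSpace α]
    (μ : Measure α) : Set α :=
  {x | ∀ V : Set α, IsOpen V → x ∈ V → 0 < μ V}

/-- `r_δ(x, μ) = inf { r > 0 : μ[U_r(x)] > δ }`. -/
def rdelta {α : Type*} [PseudoMetricSpace α] [MeasurableSpace α]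
    (x : α) (μ : Measure α) (δ : ℝ) : ℝ :=
  sInf {r : ℝ | 0 < r ∧ ENNReal.ofReal δ < μ (Metric.ball x r)}

/-- The Lévy–Prokhorov distance on Borel probability measures. -/
def lpDist {α : Type*} [MeasurableSpace α] [PseudoEMetricSpace α] :
    ProbabilityMeasure α → ProbabilityMeasure α → ℝ :=
  fun μ ν => MeasureTheory.levyProkhorovDist (μ : Measure α) (ν : Measure α)

end

section WeylHelpers

/-- Averages of a measure over windows of length `l`. -/
noncomputable def wavg (μ : Measure ℝ) (l : ℝ) : ℝ≥0∞ :=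
  ⨆ ξ : ℝ, ENNReal.ofReal (1 / l) * μ (Set.Icc ξ (ξ + l))

theorem wavg_le (μ : Measure ℝ) {l L : ℝ} (hl : 0 < l) (hL : 0 < L) :
    wavg μ L ≤ ENNReal.ofReal (1 + l / L) * wavg μ l := by
  refine iSup_le fun ξ => ?_
  set n := ⌈L / l⌉₊ with hn
  have hn1 : L / l ≤ n := Nat.le_ceil _
  have hn2 : (n : ℝ) < L / l + 1 := Nat.ceil_lt_add_one (by positivity)
  have hcover : Set.Icc ξ (ξ + L) ⊆
      ⋃ i ∈ Finset.range n, Set.Icc (ξ + i * l) (ξ + i * l + l) := by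
    intro t ht
    have hn0 : 0 < n := Nat.ceil_pos.mpr (by positivity)
    simp only [Set.mem_iUnion, Finset.mem_range, Set.mem_Icc]
    rcases lt_or_ge ((t - ξ) / l) n with h | h
    · refine ⟨⌊(t - ξ) / l⌋₊, ?_, ?_, ?_⟩
      · exact (Nat.floor_lt (div_nonneg (by linarith [ht.1]) hl.le)).mpr h
      · have := Nat.floor_le (div_nonneg (by linarith [ht.1] : (0:ℝ) ≤ t - ξ) hl.le)
        rw [le_div_iff₀ hl] at this
        linarith
      · have := Nat.lt_floor_add_one ((t - ξ) / l)
        rw [div_lt_iff₀ hl] at this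
        linarith
    · rw [le_div_iff₀ hl] at h
      rw [div_le_iff₀ hl] at hn1
      refine ⟨n - 1, by omega, ?_, ?_⟩
      · rw [Nat.cast_sub hn0]; push_cast; linarith
      · rw [Nat.cast_sub hn0]; push_cast; linarith [ht.2]
  have hpiece : ∀ x : ℝ, μ (Set.Icc x (x + l)) ≤ ENNReal.ofReal l * wavg μ l := by
    intro x
    have h1 : ENNReal.ofReal (1 / l) * μ (Set.Icc x (x + l)) ≤ wavg μ l :=
      le_iSup (fun ξ : ℝ => ENNReal.ofReal (1 / l) * μ (Set.Icc ξ (ξ + l))) x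
    calc μ (Set.Icc x (x + l))
        = ENNReal.ofReal l * (ENNReal.ofReal (1 / l) * μ (Set.Icc x (x + l))) := by
          rw [← mul_assoc, ← ENNReal.ofReal_mul hl.le, mul_one_div_cancel hl.ne']
          simp
      _ ≤ _ := by gcongr
  have hsum : μ (Set.Icc ξ (ξ + L)) ≤ n * (ENNReal.ofReal l * wavg μ l) := by
    calc μ (Set.Icc ξ (ξ + L)) ≤ _ := measure_mono hcover
      _ ≤ ∑ i ∈ Finset.range n, μ (Set.Icc (ξ + i * l) (ξ + i * l + l)) :=
          measure_biUnion_finset_le _ _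
      _ ≤ ∑ i ∈ Finset.range n, ENNReal.ofReal l * wavg μ l :=
          Finset.sum_le_sum fun i _ => hpiece _
      _ = _ := by simp
  calc ENNReal.ofReal (1 / L) * μ (Set.Icc ξ (ξ + L))
      ≤ ENNReal.ofReal (1 / L) * (n * (ENNReal.ofReal l * wavg μ l)) := by gcongr
    _ = ENNReal.ofReal (1 / L * (n * l)) * wavg μ l := by
        rw [ENNReal.ofReal_mul (by positivity), ENNReal.ofReal_mul (by positivity),
          ENNReal.ofReal_natCast]
        ring
    _ ≤ _ := by
        gcongr
        have : 1 / L * (n * l) ≤ 1 / L * ((L / l + 1) * l) := by gcongr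
        refine this.trans (le_of_eq ?_)
        field_simp

theorem tendsto_bound (l : ℝ) (A : ℝ≥0∞) :
    Tendsto (fun L : ℝ => ENNReal.ofReal (1 + l / L) * A) atTop (𝓝 A) := by
  have h1 : Tendsto (fun L : ℝ => 1 + l / L) atTop (𝓝 (1 + 0)) :=
    tendsto_const_nhds.add (tendsto_const_nhds.div_atTop tendsto_id)
  have h2 := ENNReal.tendsto_ofReal h1
  have h3 := ENNReal.Tendsto.mul_const (b := A) h2 (Or.inl (by simp))
  simpa using h3

theorem kappaW_le (T : Set ℝ) {l : ℝ} (hl : 0 < l) :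
    kappaW T ≤ ⨆ ξ : ℝ, ENNReal.ofReal (1 / l) * volume (Set.Icc ξ (ξ + l) ∩ T) := by
  have key : ∀ l : ℝ, (⨆ ξ : ℝ, ENNReal.ofReal (1 / l) * volume (Set.Icc ξ (ξ + l) ∩ T))
      = wavg (volume.restrict T) l := by
    intro l
    simp only [wavg, Measure.restrict_apply measurableSet_Icc]
  unfold kappaW
  simp only [key]
  rw [← (tendsto_bound l (wavg (volume.restrict T) l)).limsup_eq]
  refine limsup_le_limsup ?_
  filter_upwards [eventually_gt_atTop 0] with L hL
  exact wavg_le _ hl hL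

theorem weylDinf_le {α : Type*} (d : α → α → ℝ) {p : ℝ} (hp : 0 ≤ p) (f g : ℝ → α)
    {l : ℝ} (hl : 0 < l) : weylDinf d p f g ≤ weylD d p l f g := by
  set μ : Measure ℝ := volume.withDensity (fun t => ENNReal.ofReal (d (f t) (g t) ^ p)) with hμ
  have key : ∀ l : ℝ, weylD d p l f g = wavg μ l ^ (1 / p) := by
    intro l
    simp only [weylD, wavg, hμ, withDensity_apply _ measurableSet_Icc]
  unfold weylDinf
  simp only [key]
  have hlim : Tendsto (fun L : ℝ => (ENNReal.ofReal (1 + l / L) * wavg μ l) ^ (1 / p)) atTop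
      (𝓝 (wavg μ l ^ (1 / p))) :=
    (ENNReal.continuous_rpow_const.tendsto _).comp (tendsto_bound l (wavg μ l))
  rw [← hlim.limsup_eq]
  refine limsup_le_limsup ?_
  filter_upwards [eventually_gt_atTop 0] with L hL
  exact ENNReal.rpow_le_rpow (wavg_le _ hl hL) (by positivity)

theorem relDense_mono {S T : Set ℝ} (h : S ⊆ T) (hS : RelDense S) : RelDense T := by
  obtain ⟨a, ha, h'⟩ := hS
  exact ⟨a, ha, fun ξ => (h' ξ).mono (Set.inter_subset_inter_right _ h)⟩

theorem cond_one {α : Type*} (d : α → α → ℝ) {p : ℝ} (hp : 0 ≤ p) (f : ℝ → α)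
    (h : ∀ ε > 0, ∃ l > 0, RelDense (APeriodsL d p l ε f)) :
    ∀ ε > 0, RelDense (APeriods d p ε f) := by
  intro ε hε
  obtain ⟨l, hl, hr⟩ := h ε hε
  exact relDense_mono (fun τ hτ => (weylDinf_le d hp f _ hl).trans_lt hτ) hr

theorem aesm_shift {U : Type*} [TopologicalSpace U] {f : ℝ → U}
    (hf : AEStronglyMeasurable f volume) (τ : ℝ) :
    AEStronglyMeasurable (fun t => f (t + τ)) volume :=
  hf.comp_quasiMeasurePreserving (quasiMeasurePreserving_add_right volume τ)

theorem aem_dist {U : Type*} [TopologicalSpace U] {d : U → U → ℝ}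
    (hd : Continuous (Function.uncurry d)) (p : ℝ) {f g : ℝ → U}
    (hf : AEStronglyMeasurable f volume) (hg : AEStronglyMeasurable g volume) :
    AEMeasurable (fun t => ENNReal.ofReal (d (f t) (g t) ^ p)) volume := by
  have h1 : AEStronglyMeasurable (fun t => Function.uncurry d (f t, g t)) volume :=
    hd.comp_aestronglyMeasurable (hf.prodMk hg)
  exact (h1.aemeasurable.pow_const p).ennreal_ofReal

theorem cond_two {U : Type*} [MetricSpace U] {d : U → U → ℝ}
    (hd : Continuous (Function.uncurry d)) (h0 : ∀ x y, 0 ≤ d x y)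
    (htri : ∀ x y z, d x z ≤ d x y + dist y z) {p : ℝ} (hp : 1 ≤ p) {f : ℝ → U}
    (hf : AEStronglyMeasurable f volume)
    (h : ∀ ε > 0, ∃ l > 0, RelDense (APeriodsL d p l ε f)) :
    ∀ ε > 0, ∀ δ > 0, ∃ K : Set U, IsCompact K ∧
      kappaW {t | ENNReal.ofReal ε ≤ dInfDist d (f t) K} < ENNReal.ofReal δ := by
  intro ε hε δ hδ
  have hp0 : 0 < p := by linarith
  set c : ℝ := (ε / 2) ^ p with hc
  have hcpos : 0 < c := Real.rpow_pos_of_pos (by linarith) _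
  obtain ⟨l, hl, a, ha, hr⟩ := h ((c * (δ / 4)) ^ (1 / p)) (Real.rpow_pos_of_pos (by positivity) _)
  have hper : ∀ τ ∈ APeriodsL d p l ((c * (δ / 4)) ^ (1 / p)) f, ∀ ξ : ℝ,
      ENNReal.ofReal (1 / l) * ∫⁻ t in Set.Icc ξ (ξ + l),
        ENNReal.ofReal (d (f t) (f (t + τ)) ^ p) ≤ ENNReal.ofReal c * ENNReal.ofReal (δ / 4) := by
    intro τ hτ ξ
    simp only [APeriodsL, weylD, Set.mem_ofPred_eq] at hτ
    rw [one_div p, ENNReal.rpow_inv_lt_iff hp0, ENNReal.ofReal_rpow_of_nonneg (by positivity) hp0.le,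
      ← Real.rpow_mul (by positivity), inv_mul_cancel₀ hp0.ne', Real.rpow_one,
      ENNReal.ofReal_mul hcpos.le] at hτ
    exact (le_iSup (fun ξ : ℝ => ENNReal.ofReal (1 / l) * ∫⁻ t in Set.Icc ξ (ξ + l),
        ENNReal.ofReal (d (f t) (f (t + τ)) ^ p)) ξ).trans hτ.le
  -- approximation by a simple function on a window
  have htm : TendstoInMeasure (volume.restrict (Set.Icc (0:ℝ) (a + l)))
      (fun n => (hf.stronglyMeasurable_mk.approx n : ℝ → U)) atTop f := by
    refine tendstoInMeasure_of_tendsto_ae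
      (fun n => (SimpleFunc.stronglyMeasurable _).aestronglyMeasurable) ?_
    refine ae_restrict_of_ae ?_
    filter_upwards [hf.ae_eq_mk] with t ht
    rw [ht]
    exact hf.stronglyMeasurable_mk.tendsto_approx t
  have htm' := htm (ENNReal.ofReal (ε / 2)) (by simpa using hε)
  rw [ENNReal.tendsto_atTop_zero] at htm'
  obtain ⟨n, hn⟩ := htm' (ENNReal.ofReal (l * (δ / 4))) (by simp; positivity)
  have hn := hn n le_rfl
  set s := hf.stronglyMeasurable_mk.approx n with hs
  rw [Measure.restrict_apply' measurableSet_Icc] at hn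
  refine ⟨Set.range s, s.finite_range.isCompact, ?_⟩
  refine (kappaW_le _ hl).trans_lt ?_
  refine lt_of_le_of_lt (b := ENNReal.ofReal (δ / 2)) ?_
    ((ENNReal.ofReal_lt_ofReal_iff hδ).mpr (by linarith))
  refine iSup_le fun ξ => ?_
  obtain ⟨τ, hτI, hτ⟩ := hr (-ξ)
  set V : Set ℝ := {t | ENNReal.ofReal c ≤ ENNReal.ofReal (d (f t) (f (t + τ)) ^ p)} with hV
  set B : Set ℝ := {u | ENNReal.ofReal (ε / 2) ≤ edist (s u) (f u)} ∩ Set.Icc 0 (a + l) with hB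
  have hsub : Set.Icc ξ (ξ + l) ∩ {t | ENNReal.ofReal ε ≤ dInfDist d (f t) (Set.range s)} ⊆
      (V ∩ Set.Icc ξ (ξ + l)) ∪ (fun t => t + τ) ⁻¹' B := by
    rintro t ⟨htI, ht⟩
    by_cases htB : ENNReal.ofReal (ε / 2) ≤ edist (s (t + τ)) (f (t + τ))
    · right
      refine ⟨htB, ?_, ?_⟩
      · show 0 ≤ t + τ
        linarith [htI.1, hτI.1]
      · show t + τ ≤ a + l
        linarith [htI.2, hτI.2]
    · left
      refine ⟨?_, htI⟩
      have h1 : dist (f (t + τ)) (s (t + τ)) < ε / 2 := by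
        rw [not_le, edist_dist, ENNReal.ofReal_lt_ofReal_iff (by linarith), dist_comm] at htB
        exact htB
      have h2 : ENNReal.ofReal ε ≤ ENNReal.ofReal (d (f t) (s (t + τ))) :=
        ht.trans (iInf₂_le _ (Set.mem_range_self _))
      have h3 : ε ≤ d (f t) (s (t + τ)) := (ENNReal.ofReal_le_ofReal_iff (h0 _ _)).mp h2
      have h4 := htri (f t) (f (t + τ)) (s (t + τ))
      exact ENNReal.ofReal_le_ofReal (Real.rpow_le_rpow (by linarith) (by linarith) hp0.le)
  have hVm : ENNReal.ofReal (1 / l) * volume (V ∩ Set.Icc ξ (ξ + l)) ≤ ENNReal.ofReal (δ / 4) := by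
    have hm := mul_meas_ge_le_lintegral₀ (μ := volume.restrict (Set.Icc ξ (ξ + l)))
      (aem_dist hd p hf (aesm_shift hf τ)).restrict (ENNReal.ofReal c)
    rw [Measure.restrict_apply' measurableSet_Icc] at hm
    rw [← ENNReal.mul_le_mul_iff_right (a := ENNReal.ofReal c) (by simpa using hcpos)
      ENNReal.ofReal_ne_top]
    calc ENNReal.ofReal c * (ENNReal.ofReal (1 / l) * volume (V ∩ Set.Icc ξ (ξ + l)))
        = ENNReal.ofReal (1 / l) * (ENNReal.ofReal c * volume (V ∩ Set.Icc ξ (ξ + l))) := by ring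
      _ ≤ _ := mul_le_mul_right hm _
      _ ≤ _ := hper τ hτ ξ
  have hBm : ENNReal.ofReal (1 / l) * volume ((fun t => t + τ) ⁻¹' B) ≤ ENNReal.ofReal (δ / 4) := by
    rw [measure_preimage_add_right]
    calc _ ≤ ENNReal.ofReal (1 / l) * ENNReal.ofReal (l * (δ / 4)) := mul_le_mul_right hn _
      _ = _ := by
        rw [← ENNReal.ofReal_mul (by positivity)]
        congr 1
        field_simp
  calc _ ≤ ENNReal.ofReal (1 / l) *
        (volume (V ∩ Set.Icc ξ (ξ + l)) + volume ((fun t => t + τ) ⁻¹' B)) :=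
        mul_le_mul_right ((measure_mono hsub).trans (measure_union_le _ _)) _
    _ ≤ ENNReal.ofReal (δ / 4) + ENNReal.ofReal (δ / 4) := by
        rw [mul_add]
        exact add_le_add hVm hBm
    _ = _ := by
        rw [← ENNReal.ofReal_add (by positivity) (by positivity)]
        congr 1
        ring

theorem continuous_bdist {U : Type*} [MetricSpace U] :
    Continuous (Function.uncurry (bdist : U → U → ℝ)) := by
  have : Continuous fun x : U × U => min (1:ℝ) (dist x.1 x.2) := by fun_prop
  exact this

theorem kappaW_mono {S T : Set ℝ} (h : S ⊆ T) : kappaW S ≤ kappaW T := by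
  refine limsup_le_limsup (Eventually.of_forall fun l => iSup_mono fun ξ => ?_)
  gcongr

theorem pow_split {U : Type*} [MetricSpace U] {p : ℝ} (hp : 1 ≤ p) (x y z : U) :
    ENNReal.ofReal (dist x y ^ p) ≤ ENNReal.ofReal (2 ^ p) *
      (ENNReal.ofReal (dist x z ^ p) + ENNReal.ofReal (dist y z ^ p)) := by
  have hp0 : 0 ≤ p := by linarith
  rw [← ENNReal.ofReal_add (by positivity) (by positivity), ← ENNReal.ofReal_mul (by positivity)]
  apply ENNReal.ofReal_le_ofReal
  have htri := dist_triangle_right x y z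
  have hx : 0 ≤ dist x z ^ p := by positivity
  have hy : 0 ≤ dist y z ^ p := by positivity
  have h2 : (0:ℝ) ≤ 2 ^ p := by positivity
  rcases le_total (dist x z) (dist y z) with h | h
  · calc dist x y ^ p ≤ (2 * dist y z) ^ p := Real.rpow_le_rpow dist_nonneg (by linarith) hp0
      _ = 2 ^ p * dist y z ^ p := Real.mul_rpow (by norm_num) dist_nonneg
      _ ≤ _ := by gcongr; linarith
  · calc dist x y ^ p ≤ (2 * dist x z) ^ p := Real.rpow_le_rpow dist_nonneg (by linarith) hp0
      _ = 2 ^ p * dist x z ^ p := Real.mul_rpow (by norm_num) dist_nonneg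
      _ ≤ _ := by gcongr; linarith

theorem kappaW_shift_le (T : Set ℝ) (τ : ℝ) : kappaW ((fun u => u + -τ) ⁻¹' T) ≤ kappaW T := by
  refine limsup_le_limsup (Eventually.of_forall fun l => iSup_le fun ξ => ?_)
  refine le_trans (le_of_eq ?_) (le_iSup (fun ξ : ℝ =>
    ENNReal.ofReal (1 / l) * volume (Set.Icc ξ (ξ + l) ∩ T)) (ξ + -τ))
  congr 1
  rw [← measure_preimage_add_right volume (-τ) (Set.Icc (ξ + -τ) (ξ + -τ + l) ∩ T)]
  congr 1
  ext u
  simp only [Set.mem_inter_iff, Set.mem_preimage, Set.mem_Icc]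
  constructor
  · rintro ⟨⟨h1, h2⟩, h3⟩
    exact ⟨⟨by linarith, by linarith⟩, h3⟩
  · rintro ⟨⟨h1, h2⟩, h3⟩
    exact ⟨⟨by linarith, by linarith⟩, h3⟩

theorem setLIntegral_shift (F : ℝ → ℝ≥0∞) (T : Set ℝ) (τ ξ l : ℝ) :
    ∫⁻ t in Set.Icc ξ (ξ + l) ∩ T, F (t + τ) =
      ∫⁻ u in Set.Icc (ξ + τ) (ξ + τ + l) ∩ (fun u => u + -τ) ⁻¹' T, F u := by
  rw [← (measurePreserving_add_right volume τ).setLIntegral_comp_preimage_emb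
    (MeasurableEquiv.addRight τ).measurableEmbedding F
    (Set.Icc (ξ + τ) (ξ + τ + l) ∩ (fun u => u + -τ) ⁻¹' T)]
  congr 2
  ext u
  simp only [Set.mem_inter_iff, Set.mem_preimage, Set.mem_Icc, add_neg_cancel_right]
  constructor
  · rintro ⟨⟨h1, h2⟩, h3⟩
    exact ⟨⟨by linarith, by linarith⟩, h3⟩
  · rintro ⟨⟨h1, h2⟩, h3⟩
    exact ⟨⟨by linarith, by linarith⟩, h3⟩

theorem periods_star {U : Type*} [MetricSpace U] (x₀ : U) {p : ℝ} (hp : 1 ≤ p) {f : ℝ → U}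
    (hs : MemMpStar dist p x₀ f) {ε : ℝ} (hε : 0 < ε) :
    ∃ ε' > 0, APeriods bdist 1 ε' f ⊆ APeriods dist p ε f := by
  have hp0 : 0 < p := by linarith
  obtain ⟨⟨hf, -⟩, hs⟩ := hs
  set e : ℝ := (ε / 2) ^ p with he
  have hepos : 0 < e := Real.rpow_pos_of_pos (by linarith) _
  set η : ℝ := min 1 ((e / 4) ^ p⁻¹) with hη
  have hηpos : 0 < η := lt_min one_pos (Real.rpow_pos_of_pos (by positivity) _)
  have hη1 : η ≤ 1 := min_le_left _ _
  have hηp : η ^ p ≤ e / 4 := by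
    calc η ^ p ≤ ((e / 4) ^ p⁻¹) ^ p := Real.rpow_le_rpow hηpos.le (min_le_right _ _) hp0.le
      _ = e / 4 := Real.rpow_inv_rpow (by positivity) hp0.ne'
  set C : ℝ := 2 ^ p with hC
  have hCpos : 0 < C := Real.rpow_pos_of_pos (by norm_num) _
  set ε₁ : ℝ := e / (8 * C) with hε₁
  obtain ⟨δ, hδ, hstar⟩ := hs ε₁ (by positivity)
  refine ⟨δ * η, by positivity, ?_⟩
  intro τ hτ
  simp only [APeriods, Set.mem_ofPred_eq] at hτ ⊢
  set S : Set ℝ := {t | ENNReal.ofReal η ≤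
    ENNReal.ofReal (bdist (f t) (f (t + τ)) ^ (1:ℝ))} with hS
  set T : Set ℝ := toMeasurable volume S with hT
  have hTm : MeasurableSet T := measurableSet_toMeasurable _ _
  have hST : S ⊆ T := subset_toMeasurable _ _
  have hoff : ∀ t ∉ T, dist (f t) (f (t + τ)) ^ p ≤ e / 4 := by
    intro t ht
    have h1 : t ∉ S := fun h => ht (hST h)
    simp only [hS, Set.mem_ofPred_eq, not_le, Real.rpow_one] at h1
    have h2 : bdist (f t) (f (t + τ)) < η := (ENNReal.ofReal_lt_ofReal_iff hηpos).mp h1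
    have h3 : dist (f t) (f (t + τ)) < η := by
      rcases min_lt_iff.mp h2 with h | h
      · linarith
      · exact h
    exact (Real.rpow_le_rpow dist_nonneg h3.le hp0.le).trans hηp
  have hκ : kappaW T < ENNReal.ofReal δ := by
    obtain ⟨b, hb1, hb2⟩ := exists_between hτ
    have hev := eventually_lt_of_limsup_lt hb1
    have hη0 : ENNReal.ofReal η ≠ 0 := by simpa using hηpos
    refine lt_of_le_of_lt (b := b / ENNReal.ofReal η) ?_ ?_
    · refine limsup_le_of_le (h := ?_)
      filter_upwards [hev] with l hl
      simp only [weylD, div_one, ENNReal.rpow_one] at hl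
      refine iSup_le fun ξ => ?_
      rw [ENNReal.le_div_iff_mul_le (Or.inl hη0) (Or.inl ENNReal.ofReal_ne_top)]
      have hm := mul_meas_ge_le_lintegral₀ (μ := volume.restrict (Set.Icc ξ (ξ + l)))
        (aem_dist continuous_bdist 1 hf (aesm_shift hf τ)).restrict (ENNReal.ofReal η)
      rw [Measure.restrict_apply' measurableSet_Icc] at hm
      rw [Set.inter_comm, hT, Measure.measure_toMeasurable_inter_of_sFinite measurableSet_Icc]
      calc ENNReal.ofReal (1 / l) * volume (S ∩ Set.Icc ξ (ξ + l)) * ENNReal.ofReal η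
          = ENNReal.ofReal (1 / l) * (ENNReal.ofReal η * volume (S ∩ Set.Icc ξ (ξ + l))) := by ring
        _ ≤ _ := mul_le_mul_right hm _
        _ ≤ _ := le_iSup (fun ξ : ℝ => ENNReal.ofReal (1 / l) * ∫⁻ t in Set.Icc ξ (ξ + l),
          ENNReal.ofReal (bdist (f t) (f (t + τ)) ^ (1:ℝ))) ξ
        _ ≤ b := hl.le
    · rw [ENNReal.div_lt_iff (Or.inl hη0) (Or.inl ENNReal.ofReal_ne_top),
        ← ENNReal.ofReal_mul hδ.le]
      exact hb2
  have hA := eventually_lt_of_limsup_lt (hstar T hTm hκ)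
  have hB := eventually_lt_of_limsup_lt (hstar ((fun u => u + -τ) ⁻¹' T)
    (hTm.preimage (measurable_add_const _)) ((kappaW_shift_le T τ).trans_lt hκ))
  have hcd : Continuous (Function.uncurry (dist : U → U → ℝ)) := continuous_dist
  have hFm := aem_dist hcd p hf (aestronglyMeasurable_const (b := x₀))
  refine lt_of_le_of_lt (b := ENNReal.ofReal (ε / 2)) ?_
    ((ENNReal.ofReal_lt_ofReal_iff hε).mpr (by linarith))
  refine limsup_le_of_le (h := ?_)
  filter_upwards [hA, hB, eventually_gt_atTop 0] with l hA hB hl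
  simp only [weylD]
  rw [one_div p, ENNReal.rpow_inv_le_iff hp0, ENNReal.ofReal_rpow_of_nonneg (by positivity) hp0.le,
    ← he]
  refine iSup_le fun ξ => ?_
  have hA' := (le_iSup (fun ξ : ℝ => ENNReal.ofReal (1 / l) *
    ∫⁻ t in Set.Icc ξ (ξ + l) ∩ T, ENNReal.ofReal (dist (f t) x₀ ^ p)) ξ).trans hA.le
  have hB' := (le_iSup (fun ξ : ℝ => ENNReal.ofReal (1 / l) *
    ∫⁻ t in Set.Icc ξ (ξ + l) ∩ (fun u => u + -τ) ⁻¹' T,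
      ENNReal.ofReal (dist (f t) x₀ ^ p)) (ξ + τ)).trans hB.le
  rw [← setLIntegral_shift (fun t => ENNReal.ofReal (dist (f t) x₀ ^ p)) T τ ξ l] at hB'
  have hsplit : ∫⁻ t in Set.Icc ξ (ξ + l), ENNReal.ofReal (dist (f t) (f (t + τ)) ^ p) ≤
      (ENNReal.ofReal C * ((∫⁻ t in Set.Icc ξ (ξ + l) ∩ T, ENNReal.ofReal (dist (f t) x₀ ^ p)) +
        ∫⁻ t in Set.Icc ξ (ξ + l) ∩ T, ENNReal.ofReal (dist (f (t + τ)) x₀ ^ p))) +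
      ENNReal.ofReal (e / 4) * ENNReal.ofReal l := by
    rw [← lintegral_inter_add_diff _ (Set.Icc ξ (ξ + l)) hTm]
    refine add_le_add ?_ ?_
    · rw [← lintegral_add_left' hFm.restrict, ← lintegral_const_mul' _ _ ENNReal.ofReal_ne_top]
      exact lintegral_mono fun t => pow_split hp _ _ _
    · calc _ ≤ ∫⁻ t in Set.Icc ξ (ξ + l) \ T, ENNReal.ofReal (e / 4) :=
            setLIntegral_mono' (measurableSet_Icc.diff hTm)
              fun t ht => ENNReal.ofReal_le_ofReal (hoff t ht.2)
        _ = ENNReal.ofReal (e / 4) * volume (Set.Icc ξ (ξ + l) \ T) := setLIntegral_const _ _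
        _ ≤ ENNReal.ofReal (e / 4) * volume (Set.Icc ξ (ξ + l)) := by
            gcongr; exact Set.diff_subset
        _ = _ := by rw [Real.volume_Icc]; simp
  calc _ ≤ ENNReal.ofReal (1 / l) * _ := mul_le_mul_right hsplit _
    _ = ENNReal.ofReal C * (
        (ENNReal.ofReal (1 / l) * ∫⁻ t in Set.Icc ξ (ξ + l) ∩ T,
          ENNReal.ofReal (dist (f t) x₀ ^ p)) +
        (ENNReal.ofReal (1 / l) * ∫⁻ t in Set.Icc ξ (ξ + l) ∩ T,
          ENNReal.ofReal (dist (f (t + τ)) x₀ ^ p))) +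
        ENNReal.ofReal (e / 4) * (ENNReal.ofReal (1 / l) * ENNReal.ofReal l) := by ring
    _ ≤ ENNReal.ofReal C * (ENNReal.ofReal ε₁ + ENNReal.ofReal ε₁) +
        ENNReal.ofReal (e / 4) * 1 := by
        gcongr
        rw [← ENNReal.ofReal_mul (by positivity), one_div_mul_cancel hl.ne', ENNReal.ofReal_one]
    _ = ENNReal.ofReal (C * (ε₁ + ε₁) + e / 4) := by
        rw [mul_one, ← ENNReal.ofReal_add (by positivity) (by positivity),
          ← ENNReal.ofReal_mul hCpos.le, ← ENNReal.ofReal_add (by positivity) (by positivity)]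
    _ ≤ ENNReal.ofReal e := by
        apply ENNReal.ofReal_le_ofReal
        have : C * (ε₁ + ε₁) = e / 4 := by
          rw [hε₁]; field_simp; norm_num
        linarith

end WeylHelpers

/-- **Inclusions `W(ℝ,U) ∩ M*_p(ℝ,U) ⊆ W̃(ℝ,U) ∩ M*_p(ℝ,U) ⊆ W̃_p(ℝ,U)`; in
particular `W_p(ℝ,U) ⊆ W̃_p(ℝ,U)`.** -/
theorem weyl_tilde_inclusions {U : Type*} [MetricSpace U] [CompleteSpace U] (x₀ : U)
    (p : ℝ) (hp : 1 ≤ p) (f : ℝ → U) :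
    (MemWp bdist 1 x₀ f ∧ MemMpStar dist p x₀ f →
      MemWpTilde bdist 1 x₀ f ∧ MemMpStar dist p x₀ f) ∧
    (MemWpTilde bdist 1 x₀ f ∧ MemMpStar dist p x₀ f → MemWpTilde dist p x₀ f) ∧
    (MemWp dist p x₀ f → MemWpTilde dist p x₀ f) := by
  refine ⟨?_, ?_, ?_⟩
  · rintro ⟨⟨hM, hW⟩, hs⟩
    refine ⟨⟨hM, cond_one _ zero_le_one f hW, ?_⟩, hs⟩
    refine cond_two continuous_bdist (fun x y => le_min zero_le_one dist_nonneg) ?_ le_rfl hM.1 hW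
    intro x y z
    have h1 := dist_triangle x y z
    have h2 : 0 ≤ dist y z := dist_nonneg
    simp only [bdist]
    rcases le_total 1 (dist x y) with h | h
    · rw [min_eq_left h]
      linarith [min_le_left 1 (dist x z)]
    · rw [min_eq_right h]
      linarith [min_le_right 1 (dist x z)]
  · rintro ⟨⟨hM, h1, h2⟩, hs⟩
    refine ⟨hs.1, fun ε hε => ?_, fun ε hε δ hδ => ?_⟩
    · obtain ⟨ε', hε', hsub⟩ := periods_star x₀ hp hs hε
      exact relDense_mono hsub (h1 ε' hε')
    · obtain ⟨K, hK, hκ⟩ := h2 (min 1 ε) (lt_min one_pos hε) δ hδ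
      refine ⟨K, hK, (kappaW_mono ?_).trans_lt hκ⟩
      intro t ht
      show ENNReal.ofReal (min 1 ε) ≤ ⨅ y ∈ K, ENNReal.ofReal (bdist (f t) y)
      refine le_iInf₂ fun y hy => ?_
      have h3 : ENNReal.ofReal ε ≤ ENNReal.ofReal (dist (f t) y) := le_trans ht (iInf₂_le y hy)
      have h4 : ε ≤ dist (f t) y := (ENNReal.ofReal_le_ofReal_iff dist_nonneg).mp h3
      exact ENNReal.ofReal_le_ofReal (min_le_min_left _ h4)
  · rintro ⟨hM, hW⟩
    exact ⟨hM, cond_one _ (by linarith) f hW,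
      cond_two continuous_dist (fun _ _ => dist_nonneg) dist_triangle hp hM.1 hW⟩
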